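/- arXiv:1704.07540 — 3 statements merged into one kernel-verified Lean document; each statement's English description precedes it below -/
import Mathlib

section
/- Let n ≥ 1, μ̃ > 0 and λ̃ ≥ 0 be given. For every real n×n matrix σ one has ⟨𝒜σ, σ⟩ ≥ ‖σ‖² / (2μ̃ + nλ̃) in the Frobenius inner product. In particular, the compliance tensor 𝒜 is positive definite on n×n matrices, with a coercivity constant that is uniform in the Lamé constant λ̃ through the factor 1/(2μ̃ + nλ̃). -/
open Matrix

/-- The compliance tensor of linear elasticity:
`𝒜 σ = (1/(2μ̃)) (σ − (λ̃/(2μ̃ + n λ̃)) tr(σ) I)`. -/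
noncomputable def compliance (n : ℕ) (μ lam : ℝ) (σ : Matrix (Fin n) (Fin n) ℝ) :
    Matrix (Fin n) (Fin n) ℝ :=
  (1 / (2 * μ)) •
    (σ - (lam / (2 * μ + (n : ℝ) * lam)) • σ.trace • (1 : Matrix (Fin n) (Fin n) ℝ))

/-- The Frobenius inner product `⟨A, B⟩ = tr(Aᵀ B)` on square matrices. -/
def frob (n : ℕ) (A B : Matrix (Fin n) (Fin n) ℝ) : ℝ :=
  Matrix.trace (Aᵀ * B)

section Trace

variable {ι R : Type*} [Fintype ι] [Semiring R] [LinearOrder R] [IsStrictOrderedRing R]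
  [ExistsAddOfLE R]

theorem sum_diag_sq_le_trace_transpose_mul_self (A : Matrix ι ι R) :
    ∑ i, A.diag i ^ 2 ≤ trace (Aᵀ * A) := by
  simp only [trace, diag_apply, mul_apply, transpose_apply, ← sq]
  exact Finset.sum_le_sum fun i _ =>
    Finset.single_le_sum (f := fun j => A j i ^ 2) (fun j _ => sq_nonneg _) (Finset.mem_univ i)

theorem trace_sq_le_card_mul_trace_transpose_mul_self (A : Matrix ι ι R) :
    A.trace ^ 2 ≤ Fintype.card ι * trace (Aᵀ * A) :=
  calc
    A.trace ^ 2 ≤ Fintype.card ι * ∑ i, A.diag i ^ 2 := sq_sum_le_card_mul_sum_sq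
    _ ≤ Fintype.card ι * trace (Aᵀ * A) := by
      gcongr
      exact sum_diag_sq_le_trace_transpose_mul_self A

end Trace

theorem frob_compliance_left (n : ℕ) (μ lam : ℝ) (σ τ : Matrix (Fin n) (Fin n) ℝ) :
    frob n (compliance n μ lam σ) τ =
      1 / (2 * μ) * (frob n σ τ - lam / (2 * μ + n * lam) * (σ.trace * τ.trace)) := by
  simp [frob, compliance, Matrix.sub_mul]

theorem frob_compliance_self_sub_div {n : ℕ} {μ lam : ℝ} (hμ : μ ≠ 0)
    (hD : 2 * μ + n * lam ≠ 0) (σ : Matrix (Fin n) (Fin n) ℝ) :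
    frob n (compliance n μ lam σ) σ - frob n σ σ / (2 * μ + n * lam) =
      lam / (2 * μ * (2 * μ + n * lam)) * (n * frob n σ σ - σ.trace ^ 2) := by
  rw [frob_compliance_left]
  -- `field_simp` reorders `n * lam`, so `hD` has to be in the same form to be recognised.
  rw [mul_comm (n : ℝ) lam] at hD ⊢
  field_simp
  ring

/-- For `n ≥ 1`, `μ̃ > 0`, `λ̃ ≥ 0` and every real `n × n` matrix `σ`,
`⟨𝒜σ, σ⟩ ≥ ‖σ‖² / (2μ̃ + n λ̃)` in the Frobenius inner product. -/
theorem compliance_coercive (n : ℕ) (hn : 1 ≤ n) (μ lam : ℝ) (hμ : 0 < μ) (hlam : 0 ≤ lam)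
    (σ : Matrix (Fin n) (Fin n) ℝ) :
    frob n (compliance n μ lam σ) σ ≥ frob n σ σ / (2 * μ + (n : ℝ) * lam) := by
  have hD : 0 < 2 * μ + (n : ℝ) * lam := by positivity
  have htrace : 0 ≤ n * frob n σ σ - σ.trace ^ 2 := by
    simpa [frob] using trace_sq_le_card_mul_trace_transpose_mul_self σ
  rw [ge_iff_le, ← sub_nonneg, frob_compliance_self_sub_div hμ.ne' hD.ne']
  exact mul_nonneg (by positivity) htrace
end

section
/- For any vectors v = (v₁, v₂) and w = (w₁, w₂) in ℝ² with v ≠ 0, the 2×2 matrix T = (w₁/‖v‖²) [[v₁, v₂], [v₂, −v₁]] + (w₂/‖v‖²) [[−v₂, v₁], [v₁, v₂]] is symmetric, satisfies T v = w (matrix–vector product), and its Frobenius norm satisfies ‖T‖_F ≤ √2 · ‖w‖/‖v‖, where ‖v‖ and ‖w‖ denote the Euclidean norms. In particular, for any v ≠ 0 and any w there exists a symmetric 2×2 matrix T with T v = w and ‖T‖_F ≤ √2 ‖w‖/‖v‖. -/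
open Matrix

/-- Euclidean norm of a vector in `ℝ²`. -/
noncomputable def eNorm2 (v : Fin 2 → ℝ) : ℝ := Real.sqrt (v 0 ^ 2 + v 1 ^ 2)

/-- Frobenius norm of a real `2 × 2` matrix. -/
noncomputable def fNorm2 (T : Matrix (Fin 2) (Fin 2) ℝ) : ℝ :=
  Real.sqrt (∑ i, ∑ j, T i j ^ 2)

/-!
Identify `ℝ²` with `ℂ`. A symmetric trace-free matrix `!![a, b; b, -a]` acts as the conjugate-linear
map `z ↦ c * conj z` with `c = a + b * I`, and its Frobenius norm is `√2 * ‖c‖`. The matrix of the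
theorem is the one with `c = w / conj v`; it sends `v` to `w`, and the norm bound is an equality.
-/

open scoped ComplexConjugate

/-- The real matrix of the map `z ↦ c * conj z` in the basis `1, I`. These are exactly the symmetric
trace-free `2 × 2` real matrices. -/
def conjMulMatrix (c : ℂ) : Matrix (Fin 2) (Fin 2) ℝ :=
  !![c.re, c.im; c.im, -c.re]

theorem conjMulMatrix_isSymm (c : ℂ) : (conjMulMatrix c).IsSymm := by
  ext i j
  fin_cases i <;> fin_cases j <;> rfl

theorem conjMulMatrix_mulVec (c z : ℂ) :
    conjMulMatrix c *ᵥ Complex.basisOneI.equivFun z =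
      Complex.basisOneI.equivFun (c * conj z) := by
  ext i
  fin_cases i
  · simp [conjMulMatrix, mulVec, dotProduct]
  · simp [conjMulMatrix, mulVec, dotProduct, add_comm]

theorem eNorm2_basisOneI_equivFun (z : ℂ) : eNorm2 (Complex.basisOneI.equivFun z) = ‖z‖ := by
  simp [eNorm2, Complex.norm_eq_sqrt_sq_add_sq]

theorem fNorm2_conjMulMatrix (c : ℂ) : fNorm2 (conjMulMatrix c) = √2 * ‖c‖ := by
  have sum_sq_entries : ∑ i, ∑ j, conjMulMatrix c i j ^ 2 = 2 * (c.re ^ 2 + c.im ^ 2) := by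
    simp only [conjMulMatrix, Fin.sum_univ_two, of_apply, cons_val', cons_val_fin_one,
      cons_val_zero, cons_val_one, neg_sq]
    ring
  rw [fNorm2, sum_sq_entries, Real.sqrt_mul zero_le_two, ← Complex.norm_eq_sqrt_sq_add_sq]

theorem conjMulMatrix_div_conj (u z : ℂ) :
    conjMulMatrix (u / conj z) =
      (u.re / (z.re ^ 2 + z.im ^ 2)) • !![z.re, z.im; z.im, -z.re] +
        (u.im / (z.re ^ 2 + z.im ^ 2)) • !![-z.im, z.re; z.re, z.im] := by
  have re_div : (u / conj z).re = (u.re * z.re - u.im * z.im) / (z.re ^ 2 + z.im ^ 2) := by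
    rw [Complex.div_re, Complex.normSq_conj, Complex.normSq_apply, Complex.conj_re, Complex.conj_im]
    ring
  have im_div : (u / conj z).im = (u.re * z.im + u.im * z.re) / (z.re ^ 2 + z.im ^ 2) := by
    rw [Complex.div_im, Complex.normSq_conj, Complex.normSq_apply, Complex.conj_re, Complex.conj_im]
    ring
  rw [conjMulMatrix, re_div, im_div]
  simp only [smul_of, of_add_of, smul_cons, smul_empty, smul_eq_mul, cons_add_cons, empty_add_empty]
  ring_nf

theorem conjMulMatrix_div_conj_mulVec (u : ℂ) {z : ℂ} (hz : z ≠ 0) :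
    conjMulMatrix (u / conj z) *ᵥ Complex.basisOneI.equivFun z =
      Complex.basisOneI.equivFun u := by
  rw [conjMulMatrix_mulVec, div_mul_cancel₀ u ((map_ne_zero _).mpr hz)]

theorem fNorm2_conjMulMatrix_div_conj (u z : ℂ) :
    fNorm2 (conjMulMatrix (u / conj z)) =
      √2 * eNorm2 (Complex.basisOneI.equivFun u) / eNorm2 (Complex.basisOneI.equivFun z) := by
  rw [fNorm2_conjMulMatrix, norm_div, Complex.norm_conj, eNorm2_basisOneI_equivFun,
    eNorm2_basisOneI_equivFun, mul_div_assoc]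

/-- Symmetrization tool: for `v ≠ 0` and any `w` in `ℝ²`, the explicit matrix
`T = (w₁/‖v‖²)[[v₁,v₂],[v₂,−v₁]] + (w₂/‖v‖²)[[−v₂,v₁],[v₁,v₂]]` is symmetric,
maps `v` to `w`, and satisfies `‖T‖_F ≤ √2 ‖w‖/‖v‖`.  In particular such a
symmetric matrix always exists. -/
theorem symmetrization_tool (v w : Fin 2 → ℝ) (hv : v ≠ 0)
    (T : Matrix (Fin 2) (Fin 2) ℝ)
    (hT : T = (w 0 / (v 0 ^ 2 + v 1 ^ 2)) • !![v 0, v 1; v 1, -v 0] +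
              (w 1 / (v 0 ^ 2 + v 1 ^ 2)) • !![-v 1, v 0; v 0, v 1]) :
    T.IsSymm ∧ T.mulVec v = w ∧
      fNorm2 T ≤ Real.sqrt 2 * eNorm2 w / eNorm2 v ∧
      ∃ T' : Matrix (Fin 2) (Fin 2) ℝ, T'.IsSymm ∧ T'.mulVec v = w ∧
        fNorm2 T' ≤ Real.sqrt 2 * eNorm2 w / eNorm2 v := by
  obtain ⟨z, rfl⟩ := Complex.basisOneI.equivFun.surjective v
  obtain ⟨u, rfl⟩ := Complex.basisOneI.equivFun.surjective w
  have hz : z ≠ 0 := Complex.basisOneI.equivFun.map_ne_zero_iff.mp hv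
  have T_eq : T = conjMulMatrix (u / conj z) := by
    simpa [conjMulMatrix_div_conj] using hT
  have T_symm : T.IsSymm := T_eq ▸ conjMulMatrix_isSymm _
  have T_mulVec : T *ᵥ Complex.basisOneI.equivFun z = Complex.basisOneI.equivFun u :=
    T_eq ▸ conjMulMatrix_div_conj_mulVec u hz
  have T_norm : fNorm2 T ≤ √2 * eNorm2 (Complex.basisOneI.equivFun u) /
      eNorm2 (Complex.basisOneI.equivFun z) :=
    (T_eq ▸ fNorm2_conjMulMatrix_div_conj u z).le
  exact ⟨T_symm, T_mulVec, T_norm, T, T_symm, T_mulVec, T_norm⟩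
end

section
/- Let ρ : ℝ³ → ℝ^{3×3} be differentiable at a point x. Then skw(curl ρ(x)) = −(1/2) Skw₃( (div (Ξρ))(x) ), where curl is applied row-wise, Ξρ is the matrix field y ↦ ρ(y)ᵀ − tr(ρ(y)) I, and div is applied row-wise. Consequently, for every real 3×3 matrix τ̃, the matrix τ̃ + curl ρ(x) is symmetric if and only if (div (Ξρ))(x) = (τ̃₂₃ − τ̃₃₂, τ̃₃₁ − τ̃₁₃, τ̃₁₂ − τ̃₂₁). -/
open Matrix

/-!
A `3 × 3` matrix `M` and the vector `axialVector M` carry the same antisymmetric information: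
`M - Mᵀ = skewMatrix (axialVector M)`, and `M` is symmetric exactly when its axial vector vanishes.
Everything therefore follows from the vector identity `axialVector (curl ρ) = -div (Ξ ρ)`. Since `Ξ`
is linear it commutes with differentiation, so that `(div (Ξ ρ))ᵢ = ∑ⱼ ∂ⱼρⱼᵢ - ∂ᵢ(tr ρ)`; the two
terms `∂ᵢρᵢᵢ` cancel, and in dimension three the four that remain are, up to sign, those of the
`i`-th component of `axialVector (curl ρ)`.
-/

section AxialVector

variable {R : Type*} [AddCommGroup R]

/-- The matrix `Skw₃ v` with axial vector `2 v`. The sign convention is opposite to the usual one: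
`Skw₃ v` acts on column vectors as `w ↦ w × v`. -/
def skewMatrix (v : Fin 3 → R) : Matrix (Fin 3) (Fin 3) R :=
  !![0, v 2, -v 1; -v 2, 0, v 0; v 1, -v 0, 0]

/-- The axial vector of a `3 × 3` matrix, normalised without the factor `1 / 2` so that it encodes
`M - Mᵀ` rather than the skew part of `M`. -/
def axialVector (M : Matrix (Fin 3) (Fin 3) R) : Fin 3 → R :=
  ![M 1 2 - M 2 1, M 2 0 - M 0 2, M 0 1 - M 1 0]

theorem skewMatrix_eq_zero_iff {v : Fin 3 → R} : skewMatrix v = 0 ↔ v = 0 := by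
  refine ⟨fun h => ?_, fun h => ?_⟩
  · ext i
    fin_cases i
    exacts [congr_fun₂ h 1 2, congr_fun₂ h 2 0, congr_fun₂ h 0 1]
  · ext i k
    fin_cases i <;> fin_cases k <;> simp [skewMatrix, h]

theorem skewMatrix_neg (v : Fin 3 → R) : skewMatrix (-v) = -skewMatrix v := by
  ext i k
  fin_cases i <;> fin_cases k <;> simp [skewMatrix]

theorem skewMatrix_axialVector (M : Matrix (Fin 3) (Fin 3) R) :
    skewMatrix (axialVector M) = M - Mᵀ := by
  ext i k
  fin_cases i <;> fin_cases k <;> simp [skewMatrix, axialVector]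

theorem axialVector_add (M N : Matrix (Fin 3) (Fin 3) R) :
    axialVector (M + N) = axialVector M + axialVector N := by
  ext i
  fin_cases i <;> simp [axialVector, add_sub_add_comm]

theorem isSymm_iff_axialVector_eq_zero {M : Matrix (Fin 3) (Fin 3) R} :
    M.IsSymm ↔ axialVector M = 0 := by
  rw [← skewMatrix_eq_zero_iff, skewMatrix_axialVector, sub_eq_zero, eq_comm, Matrix.IsSymm]

theorem isSymm_add_iff_neg_axialVector_eq {M N : Matrix (Fin 3) (Fin 3) R} :
    (M + N).IsSymm ↔ -axialVector N = axialVector M := by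
  rw [isSymm_iff_axialVector_eq_zero, axialVector_add, add_eq_zero_iff_eq_neg, eq_comm]

end AxialVector

section MatrixField

variable {𝕜 n : Type*} [NontriviallyNormedField 𝕜] [Fintype n] [DecidableEq n]

/-- The partial derivative `∂ⱼ f(x)`. As an application of `fderiv`, it is `0` wherever `f` is not
differentiable. -/
noncomputable def partialDeriv {E : Type*} [NormedAddCommGroup E] [NormedSpace 𝕜 E]
    (f : (n → 𝕜) → E) (x : n → 𝕜) (j : n) : E :=
  fderiv 𝕜 f x (Pi.single j 1)

/-- The row-wise divergence of a matrix field. -/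
noncomputable def rowDiv (η : (n → 𝕜) → n → n → 𝕜) (x : n → 𝕜) : n → 𝕜 :=
  fun i => ∑ j, partialDeriv η x j i j

/-- The row-wise curl of a matrix field on three-dimensional space. -/
noncomputable def rowCurl (ρ : (Fin 3 → 𝕜) → Fin 3 → Fin 3 → 𝕜) (x : Fin 3 → 𝕜) :
    Matrix (Fin 3) (Fin 3) 𝕜 :=
  of fun i => ![partialDeriv ρ x 1 i 2 - partialDeriv ρ x 2 i 1,
    partialDeriv ρ x 2 i 0 - partialDeriv ρ x 0 i 2,
    partialDeriv ρ x 0 i 1 - partialDeriv ρ x 1 i 0]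

/-- The operator `Ξ M = Mᵀ - tr(M) I`, as a continuous linear map. Matrices are taken as functions
`n → n → 𝕜` because these, unlike `Matrix n n 𝕜`, carry a global norm. -/
def transposeSubTrace : (n → n → 𝕜) →L[𝕜] (n → n → 𝕜) where
  toFun M := of.symm ((of M)ᵀ - trace (of M) • 1)
  map_add' M N := by
    simp only [← of_add_of, transpose_add, trace_add, add_smul, add_sub_add_comm]
    rfl
  map_smul' c M := by
    simp only [← smul_of, transpose_smul, trace_smul, smul_assoc, ← smul_sub]
    rfl
  cont := by
    have continuous_of : Continuous (of : (n → n → 𝕜) → Matrix n n 𝕜) := continuous_id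
    exact continuous_of.matrix_transpose.sub (continuous_of.matrix_trace.smul continuous_const)

theorem transposeSubTrace_apply (M : n → n → 𝕜) (i k : n) :
    transposeSubTrace M i k = M k i - trace (of M) * (1 : Matrix n n 𝕜) i k :=
  rfl

theorem rowDiv_transposeSubTrace {ρ : (n → 𝕜) → n → n → 𝕜} {x : n → 𝕜}
    (hρ : DifferentiableAt 𝕜 ρ x) (i : n) :
    rowDiv (fun y => transposeSubTrace (ρ y)) x i =
      ∑ j, partialDeriv ρ x j j i - trace (of (partialDeriv ρ x i)) := by
  have partialDeriv_comp (j : n) : partialDeriv (fun y => transposeSubTrace (ρ y)) x j =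
      transposeSubTrace (partialDeriv ρ x j) := by
    rw [partialDeriv, fderiv_fun_comp x (transposeSubTrace (𝕜 := 𝕜)).differentiableAt hρ,
      (transposeSubTrace (𝕜 := 𝕜)).fderiv, ContinuousLinearMap.comp_apply, partialDeriv]
  simp [rowDiv, partialDeriv_comp, transposeSubTrace_apply, Matrix.one_apply]

theorem axialVector_rowCurl {ρ : (Fin 3 → 𝕜) → Fin 3 → Fin 3 → 𝕜} {x : Fin 3 → 𝕜}
    (hρ : DifferentiableAt 𝕜 ρ x) :
    axialVector (rowCurl ρ x) = -rowDiv (fun y => transposeSubTrace (ρ y)) x := by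
  ext i
  rw [Pi.neg_apply, rowDiv_transposeSubTrace hρ, trace_fin_three, Fin.sum_univ_three]
  fin_cases i <;> simp [axialVector, rowCurl] <;> ring

theorem skw_curl_three_dim_general {ρ : (Fin 3 → 𝕜) → Fin 3 → Fin 3 → 𝕜} {x : Fin 3 → 𝕜}
    (hρ : DifferentiableAt 𝕜 ρ x) :
    rowCurl ρ x - (rowCurl ρ x)ᵀ = -skewMatrix (rowDiv (fun y => transposeSubTrace (ρ y)) x) ∧
      ∀ τ : Matrix (Fin 3) (Fin 3) 𝕜, (τ + rowCurl ρ x).IsSymm ↔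
        rowDiv (fun y => transposeSubTrace (ρ y)) x = axialVector τ := by
  refine ⟨?_, fun τ => ?_⟩
  · rw [← skewMatrix_axialVector, axialVector_rowCurl hρ, skewMatrix_neg]
  · rw [isSymm_add_iff_neg_axialVector_eq, axialVector_rowCurl hρ, neg_neg]

end MatrixField

/-- For a matrix field `ρ : ℝ³ → ℝ^{3×3}` differentiable at `x`, with `curl ρ(x)`
the row-wise curl, `Ξρ = y ↦ ρ(y)ᵀ − tr(ρ(y)) I`, and `div` the row-wise divergence,
one has `skw(curl ρ(x)) = −(1/2) Skw₃((div Ξρ)(x))`; consequently, for every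
`3 × 3` matrix `τ̃`, `τ̃ + curl ρ(x)` is symmetric iff
`(div Ξρ)(x) = (τ̃₂₃ − τ̃₃₂, τ̃₃₁ − τ̃₁₃, τ̃₁₂ − τ̃₂₁)`. -/
theorem skw_curl_three_dim (ρ : (Fin 3 → ℝ) → Fin 3 → Fin 3 → ℝ) (x : Fin 3 → ℝ)
    (hρ : DifferentiableAt ℝ ρ x)
    (curlρ : Matrix (Fin 3) (Fin 3) ℝ)
    (hcurl : ∀ i,
      curlρ i 0 = fderiv ℝ ρ x (Pi.single 1 1) i 2 - fderiv ℝ ρ x (Pi.single 2 1) i 1 ∧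
      curlρ i 1 = fderiv ℝ ρ x (Pi.single 2 1) i 0 - fderiv ℝ ρ x (Pi.single 0 1) i 2 ∧
      curlρ i 2 = fderiv ℝ ρ x (Pi.single 0 1) i 1 - fderiv ℝ ρ x (Pi.single 1 1) i 0)
    (Ξρ : (Fin 3 → ℝ) → Fin 3 → Fin 3 → ℝ)
    (hΞ : Ξρ = fun y i k => ρ y k i - (∑ j, ρ y j j) * (if i = k then 1 else 0))
    (d : Fin 3 → ℝ)
    (hd : ∀ i, d i = ∑ j, fderiv ℝ Ξρ x (Pi.single j 1) i j) :
    ((1 : ℝ) / 2) • (curlρ - curlρᵀ) =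
      (-(1 : ℝ) / 2) • !![0, d 2, -d 1; -d 2, 0, d 0; d 1, -d 0, 0] ∧
    ∀ τ : Matrix (Fin 3) (Fin 3) ℝ, (τ + curlρ).IsSymm ↔
      d = ![τ 1 2 - τ 2 1, τ 2 0 - τ 0 2, τ 0 1 - τ 1 0] := by
  obtain rfl : curlρ = rowCurl ρ x := by
    ext i k
    fin_cases k
    exacts [(hcurl i).1, (hcurl i).2.1, (hcurl i).2.2]
  obtain rfl : Ξρ = fun y => transposeSubTrace (ρ y) := hΞ
  obtain rfl : d = rowDiv (fun y => transposeSubTrace (ρ y)) x := funext hd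
  obtain ⟨sub_transpose_eq, isSymm_iff⟩ := skw_curl_three_dim_general hρ
  refine ⟨?_, isSymm_iff⟩
  rw [sub_transpose_eq, smul_neg, neg_div, neg_smul, skewMatrix]
end
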